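/- Let l, n, d be positive integers with d ≥ n ≥ 2. Every word over an alphabet of l letters of length at least 256 · l · (nd)^{2·log_2(nd) + 10} · d^2 either contains a d-th power of a nonempty subword or is n-divisible. -/

import Mathlib

/-- `W` is `n`-divisible. -/
def IsNDivisible {α : Type*} [LinearOrder α] (n : ℕ) (W : List α) : Prop :=
  ∃ (v : List α) (us : List (List α)), us.length = n ∧ (∀ u ∈ us, u ≠ []) ∧
    W = v ++ us.flatten ∧ us.Chain' (fun a b => b < a)

/-!
Let `W` be a word that is not `(m + 1)`-divisible. For every `q`, positions of `W` congruent mod `q`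
contain no `m + 1` terms along which the factors of length `q` strictly decrease, so they split into
`m` classes along which these factors weakly increase. Cut an interval of positions that carries few
distinct factors of length `q` into many blocks: by pigeonhole some block sees no increase at all,
hence at most `m` factors per residue mod `q`. A factor of length `2 * q` is a pair of factors of
length `q`, so this can be iterated along `q = 1, 2, 4, …`, at the cost of a subexponential loss in
the length of the interval.

Once `q ≥ (m + 1) * d` there are so few factors that one of them, `V`, has `m + 1` disjoint
occurrences. If `W` has no `d`-th power, then `V` has no small period, so its long factors at the
offsets `0, …, m` are distinct; taking the largest one in the first occurrence of `V`, the second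
largest in the second occurrence, and so on, makes `W` an `(m + 1)`-divisible word after all.
-/

section Factors

variable {α : Type*} {W : List α} {q i : ℕ}

/-- The factor (contiguous subword) of `W` of length `q` starting at position `i`, counted from `0`.
It is shorter than `q` when `W.length < i + q`. -/
def factor (W : List α) (q i : ℕ) : List α := (W.drop i).take q

/-- `W` contains the `d`-th power of a nonempty word as a contiguous subword. -/
def ContainsPower (d : ℕ) (W : List α) : Prop :=
  ∃ u : List α, u ≠ [] ∧ (List.replicate d u).flatten <:+: W

theorem lt_of_take_lt_take [LT α] {u v : List α} (h : u.take q < v.take q) : u < v := by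
  induction q generalizing u v with
  | zero => exact absurd h (by simp)
  | succ q ih =>
    rcases v with _ | ⟨b, v⟩
    · exact absurd h (by simp)
    · rcases u with _ | ⟨a, u⟩
      · exact List.nil_lt_cons b v
      · rw [List.take_succ_cons, List.take_succ_cons, List.cons_lt_cons_iff] at h
        exact List.cons_lt_cons_iff.2 (h.imp_right fun h => ⟨h.1, ih h.2⟩)

theorem factor_ne_nil (hq : 0 < q) (hi : i < W.length) : factor W q i ≠ [] := by
  simp only [factor, ne_eq, List.take_eq_nil_iff, List.drop_eq_nil_iff]
  omega

theorem factor_factor {M b : ℕ} (h : b + q ≤ M) :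
    factor (factor W M i) q b = factor W q (i + b) := by
  simp only [factor, List.drop_take, List.take_take, List.drop_drop]
  congr 1
  omega

theorem factor_add (W : List α) (a b i : ℕ) :
    factor W (a + b) i = factor W a i ++ factor W b (i + a) := by
  simp only [factor, List.take_add, List.drop_drop]

theorem replicate_flatten_prefix_of_take_eq_take_drop {X : List α} {p d : ℕ}
    (hX : X.take q = (X.drop p).take q) (hlen : p ≤ X.length) (hd : d * p ≤ p + q) :
    (List.replicate d (X.take p)).flatten <+: X := by
  induction d with
  | zero => exact List.nil_prefix
  | succ d ih =>
    have hdq : d * p ≤ q := by rw [Nat.succ_mul] at hd; omega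
    have power_eq : (List.replicate d (X.take p)).flatten = (X.drop p).take (d * p) := by
      have hprefix := List.prefix_iff_eq_take.1 (ih (by omega))
      have hlength : (List.replicate d (X.take p)).flatten.length = d * p := by
        simp [min_eq_left hlen]
      have htake := congrArg (List.take (d * p)) hX
      rw [List.take_take, List.take_take, min_eq_left hdq] at htake
      rw [hprefix, hlength, htake]
    rw [List.replicate_succ, List.flatten_cons, power_eq]
    conv_rhs => rw [← List.take_append_drop p X]
    exact (List.prefix_append_right_inj _).2 (List.take_prefix _ _)

theorem containsPower_of_factor_eq {p d : ℕ} (hp : 0 < p) (hd : d * p ≤ p + q)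
    (hi : i + p ≤ W.length) (h : factor W q i = factor W q (i + p)) : ContainsPower d W := by
  refine ⟨factor W p i, factor_ne_nil hp (by omega), ?_⟩
  have hprefix : (List.replicate d (factor W p i)).flatten <+: W.drop i :=
    replicate_flatten_prefix_of_take_eq_take_drop
      (by simpa only [factor, List.drop_drop] using h) (by rw [List.length_drop]; omega) hd
  exact hprefix.isInfix.trans (List.drop_suffix i W).isInfix

theorem ContainsPower.of_infix {V : List α} {d : ℕ} (hV : ContainsPower d V) (h : V <:+: W) :
    ContainsPower d W :=
  hV.imp fun _ hu => ⟨hu.1, hu.2.trans h⟩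

theorem factor_injective_of_not_containsPower {V : List α} {m d : ℕ} (hm : m ≤ V.length)
    (hd : m * d ≤ V.length) (hpow : ¬ ContainsPower d V) :
    Function.Injective fun b : Fin (m + 1) => factor V (V.length - m) b := by
  suffices h : ∀ b c : Fin (m + 1), b < c →
      factor V (V.length - m) b ≠ factor V (V.length - m) c from
    .of_lt_imp_ne h
  intro b c hbc heq
  obtain ⟨p, hp⟩ : ∃ p, (c : ℕ) = b + p := Nat.exists_eq_add_of_le (Fin.le_def.1 hbc.le)
  have hpm : p ≤ m := by omega
  refine hpow (containsPower_of_factor_eq (p := p) (by omega) ?_ (by omega) (hp ▸ heq))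
  obtain _ | e := d
  · omega
  · have := Nat.mul_le_mul_right e hpm
    rw [Nat.mul_succ] at hd
    rw [Nat.succ_mul, mul_comm]
    omega

end Factors

section Descents

variable {α : Type*} [LinearOrder α] {W : List α} {q m : ℕ}

/-- The factors of `W` of length `q` at the positions `i` and `k` are disjoint, lie inside `W` in
this order, and strictly decrease. -/
def IsDescent (W : List α) (q i k : ℕ) : Prop :=
  i + q ≤ k ∧ k + q ≤ W.length ∧ factor W q k < factor W q i

theorem exists_drop_eq_flatten_of_isChain_isDescent (hq : 0 < q) {i : ℕ} {p : List ℕ}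
    (hi : i + q ≤ W.length) (hp : (i :: p).IsChain (IsDescent W q)) :
    ∃ (u : List α) (us : List (List α)), us.length = p.length ∧ (∀ x ∈ u :: us, x ≠ []) ∧
      W.drop i = (u :: us).flatten ∧ (u :: us).IsChain (fun a b => b < a) ∧
      u.take q = factor W q i := by
  induction p generalizing i with
  | nil =>
    refine ⟨W.drop i, [], rfl, ?_, by simp, by simp, rfl⟩
    simp only [List.mem_singleton, forall_eq, ne_eq, List.drop_eq_nil_iff]
    omega
  | cons k p ih =>
    obtain ⟨⟨hik, hk, hlt⟩, hp⟩ := List.isChain_cons_cons.1 hp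
    obtain ⟨u, us, hlen, hne, hflat, hchain, htake⟩ := ih hk hp
    have htake' : (factor W (k - i) i).take q = factor W q i := by
      simp only [factor, List.take_take]
      congr 1
      omega
    refine ⟨factor W (k - i) i, u :: us, by simp [hlen], ?_, ?_, ?_, htake'⟩
    · exact List.forall_mem_cons.2 ⟨factor_ne_nil (by omega) (by omega), hne⟩
    · have hdrop : W.drop k = (W.drop i).drop (k - i) := by
        rw [List.drop_drop, Nat.add_sub_cancel' (by omega)]
      rw [List.flatten_cons, ← hflat, hdrop, factor, List.take_append_drop]
    · refine List.isChain_cons_cons.2 ⟨lt_of_take_lt_take (q := q) ?_, hchain⟩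
      rwa [htake, htake']

theorem isNDivisible_of_isChain_isDescent (hq : 0 < q) {i : ℕ} {p : List ℕ}
    (hi : i + q ≤ W.length) (hp : (i :: p).IsChain (IsDescent W q)) :
    IsNDivisible (p.length + 1) W := by
  obtain ⟨u, us, hlen, hne, hflat, hchain, -⟩ :=
    exists_drop_eq_flatten_of_isChain_isDescent hq hi hp
  exact ⟨W.take i, u :: us, by rw [List.length_cons, hlen], hne,
    by rw [← hflat, List.take_append_drop], hchain⟩

theorem exists_rank_of_no_long_chain {β : Type*} {r : β → β → Prop}
    (hr : ∀ i p, (i :: p).IsChain r → p.length ≠ m) :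
    ∃ h : β → Fin m, ∀ i k, r i k → h k < h i := by
  classical
  let HasChain (i : β) (t : ℕ) : Prop := ∃ p : List β, p.length = t ∧ (i :: p).IsChain r
  let rank (i : β) : ℕ := Nat.findGreatest (HasChain i) m
  have rank_spec (i : β) : HasChain i (rank i) :=
    Nat.findGreatest_spec (Nat.zero_le m) ⟨[], rfl, List.isChain_singleton i⟩
  have rank_lt (i : β) : rank i < m := by
    refine lt_of_le_of_ne (Nat.findGreatest_le m) fun heq => ?_
    obtain ⟨p, hlen, hp⟩ := rank_spec i
    exact hr i p hp (hlen.trans heq)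
  refine ⟨fun i => ⟨rank i, rank_lt i⟩, fun i k hik => ?_⟩
  obtain ⟨p, hlen, hp⟩ := rank_spec k
  exact Fin.lt_def.2 <| Nat.le_findGreatest (rank_lt k)
    ⟨k :: p, by rw [List.length_cons, hlen], List.isChain_cons_cons.2 ⟨hik, hp⟩⟩

theorem exists_coloring_factor_le (hm : 0 < m) (hq : 0 < q) (hdiv : ¬ IsNDivisible (m + 1) W) :
    ∃ h : ℕ → Fin m, ∀ i k, i < k → k + q ≤ W.length → i % q = k % q → h i = h k →
      factor W q i ≤ factor W q k := by
  obtain ⟨h, hh⟩ : ∃ h : ℕ → Fin m, ∀ i k, IsDescent W q i k → h k < h i := by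
    refine exists_rank_of_no_long_chain fun i p hp hlen => hdiv ?_
    obtain ⟨k, p, rfl⟩ := List.exists_cons_of_length_pos (hlen ▸ hm)
    obtain ⟨hik, hk, -⟩ := (List.isChain_cons_cons.1 hp).1
    exact hlen ▸ isNDivisible_of_isChain_isDescent hq (by omega) hp
  refine ⟨h, fun i k hik hk hmod heq => not_lt.1 fun hlt => ?_⟩
  have hgap : q ≤ k - i := Nat.le_of_dvd (by omega) ((Nat.modEq_iff_dvd' hik.le).1 hmod)
  exact (hh i k ⟨by omega, hk, hlt⟩).ne heq.symm

theorem isNDivisible_of_repeated_factor {M d : ℕ} {V : List α} {p : Fin (m + 1) → ℕ}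
    (hm : m < M) (hd : m * d ≤ M) (hgap : ∀ i j, i < j → p i + M ≤ p j)
    (hend : ∀ j, p j + M ≤ W.length) (hV : ∀ j, factor W M (p j) = V)
    (hpow : ¬ ContainsPower d W) : IsNDivisible (m + 1) W := by
  have hVlen : V.length = M := by
    have := hend 0
    rw [← hV 0, factor, List.length_take, List.length_drop]
    omega
  have hVW : V <:+: W := hV 0 ▸ (List.take_prefix _ _).isInfix.trans (List.drop_suffix _ _).isInfix
  let g (b : Fin (m + 1)) : List α := factor V (M - m) b
  have hg : Function.Injective g := by
    subst hVlen
    exact factor_injective_of_not_containsPower hm.le hd fun h => hpow (h.of_infix hVW)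
  let shift (j : Fin (m + 1)) : Fin (m + 1) := Tuple.sort g (Fin.rev j)
  have hshift : StrictAnti (g ∘ shift) :=
    ((Tuple.monotone_sort g).strictMono_of_injective
      (hg.comp (Tuple.sort g).injective)).comp_strictAnti Fin.rev_strictAnti
  have hshift_le (j : Fin (m + 1)) : (shift j : ℕ) ≤ m := Fin.is_le (shift j)
  have hfactor (j : Fin (m + 1)) : factor W (M - m) (p j + shift j) = g (shift j) := by
    have := hshift_le j
    rw [← factor_factor (M := M) (by omega), hV]
  have hend' (j : Fin (m + 1)) : p j + shift j + (M - m) ≤ W.length := by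
    have := hend j
    have := hshift_le j
    omega
  have hchain : (List.ofFn fun j => p j + shift j).IsChain (IsDescent W (M - m)) := by
    refine List.isChain_ofFn.2 fun j hj => ⟨?_, hend' _, ?_⟩
    · have := hgap ⟨j, by omega⟩ ⟨j + 1, hj⟩ (Fin.mk_lt_mk.2 j.lt_succ_self)
      have := hshift_le ⟨j, by omega⟩
      omega
    · rw [hfactor, hfactor]
      exact hshift (Fin.mk_lt_mk.2 j.lt_succ_self)
  rw [List.ofFn_succ] at hchain
  simpa only [List.length_ofFn] using
    isNDivisible_of_isChain_isDescent (by omega) (hend' 0) hchain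

end Descents

section Pigeonhole

theorem exists_block_eq_of_color_eq {κ β : Type*} [DecidableEq κ] [DecidableEq β] [PartialOrder β]
    {c : ℕ → κ} {f : ℕ → β} {s N F : ℕ}
    (hmono : ∀ i k, s ≤ i → i < k → k < s + F * N → c i = c k → f i ≤ f k)
    (hcard : ((Finset.Ico s (s + F * N)).image fun i => (c i, f i)).card < F) :
    ∃ b < F, ∀ i k, s + b * N ≤ i → i < k → k < s + b * N + N → c i = c k → f i = f k := by
  by_contra! hcon
  choose! i k hi hik hk hcolor hne using hcon
  have hblock {b b' : ℕ} (hb : b < b') : b * N + N ≤ b' * N := by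
    simpa only [Nat.succ_mul] using Nat.mul_le_mul_right N hb
  have hi' {b : ℕ} (hb : b < F) : s ≤ i b := (Nat.le_add_right _ _).trans (hi b hb)
  have hk' {b : ℕ} (hb : b < F) : k b < s + F * N := by
    have := hk b hb
    have := hblock hb
    omega
  have hki {b b' : ℕ} (hb : b < b') (hb' : b' < F) : k b < i b' := by
    have := hk b (hb.trans hb')
    have := hi b' hb'
    have := hblock hb
    omega
  obtain ⟨b, hb, b', hb', hne', heq⟩ := Finset.exists_ne_map_eq_of_card_lt_of_maps_to
    (s := Finset.range F) (f := fun b => (c (k b), f (k b))) (by simpa using hcard)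
    fun b hb => by
      have hbF := Finset.mem_range.1 hb
      exact Finset.mem_image_of_mem (fun i => (c i, f i))
        (Finset.mem_Ico.2 ⟨(hi' hbF).trans (hik b hbF).le, hk' hbF⟩)
  rw [Finset.mem_range] at hb hb'
  wlog hlt : b < b' generalizing b b'
  · exact this b' hb' b hb hne'.symm heq.symm (by omega)
  obtain ⟨hc, hf⟩ := Prod.mk.inj heq
  -- The value at `k b` recurs at `k b'`, so it cannot have increased from `i b'` to `k b'`.
  have hle : f (k b) ≤ f (i b') :=
    hmono _ _ ((hi' hb).trans (hik b hb).le) (hki hlt hb') ((hik b' hb').trans (hk' hb'))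
      (hc.trans (hcolor b' hb').symm)
  exact hne b' hb' <|
    (hmono _ _ (hi' hb') (hik b' hb') (hk' hb') (hcolor b' hb')).antisymm (hf ▸ hle)

theorem card_image_le_card_image_of_eq_imp_eq {ι β κ : Type*} [DecidableEq β] [DecidableEq κ]
    {s : Finset ι} {f : ι → β} {h : ι → κ} (hf : ∀ i ∈ s, ∀ k ∈ s, h i = h k → f i = f k) :
    (s.image f).card ≤ (s.image h).card := by
  obtain ⟨u, hus, hinj, himage⟩ := Finset.exists_subset_injOn_image_eq_of_surjOn
    (s : Set ι) (s.image f) (by simpa only [Finset.coe_image] using Set.surjOn_image f s)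
  have hinj' : Set.InjOn h u := fun i hi k hk hik => hinj hi hk (hf i (hus hi) k (hus hk) hik)
  calc (s.image f).card = (u.image h).card := by
        rw [← himage, Finset.card_image_of_injOn hinj, Finset.card_image_of_injOn hinj']
    _ ≤ (s.image h).card := Finset.card_le_card (Finset.image_subset_image hus)

end Pigeonhole

section FewFactors

variable {α : Type*} [DecidableEq α] {W : List α} {q m : ℕ}

/-- The factors of `W` of length `q` starting at those positions in `I` that are `r` mod `q`. -/
def residueFactors (W : List α) (q : ℕ) (I : Finset ℕ) (r : ℕ) : Finset (List α) :=
  {i ∈ I | i % q = r}.image (factor W q)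

/-- For each residue mod `q`, the positions in `I` of this residue carry at most `B` distinct
factors of `W` of length `q`. -/
def FewFactors (W : List α) (q B : ℕ) (I : Finset ℕ) : Prop :=
  ∀ r, (residueFactors W q I r).card ≤ B

theorem factor_mem_residueFactors {I : Finset ℕ} {i r : ℕ} (hi : i ∈ I) (hr : i % q = r) :
    factor W q i ∈ residueFactors W q I r :=
  Finset.mem_image_of_mem _ (Finset.mem_filter.2 ⟨hi, hr⟩)

theorem FewFactors.card_image_color_le {B : ℕ} {I : Finset ℕ} (hI : FewFactors W q B I)
    (hq : 0 < q) (h : ℕ → Fin m) :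
    (I.image fun i => ((i % q, h i), factor W q i)).card ≤ B * (q * m) := by
  have hcolors : (Finset.range q ×ˢ (Finset.univ : Finset (Fin m))).card = q * m := by simp
  rw [← hcolors]
  refine Finset.card_le_mul_card_image_of_maps_to (f := Prod.fst) ?_ B ?_
  · simp only [Finset.forall_mem_image, Finset.mem_product, Finset.mem_range, Finset.mem_univ,
      and_true]
    exact fun i _ => Nat.mod_lt i hq
  · rintro ⟨r, t⟩ -
    refine (Finset.card_le_card_of_injOn Prod.snd ?_ ?_).trans (hI r)
    · simp only [Set.MapsTo, Finset.coe_filter, Finset.mem_image, Set.mem_ofPred_eq, Finset.mem_coe]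
      rintro _ ⟨⟨i, hi, rfl⟩, hcolor⟩
      exact factor_mem_residueFactors hi (congrArg Prod.fst hcolor)
    · simp only [Set.InjOn, Finset.coe_filter, Set.mem_ofPred_eq]
      exact fun x hx y hy hxy => Prod.ext (hx.2.trans hy.2.symm) hxy

theorem FewFactors.double {B : ℕ} {I I' : Finset ℕ} (hI : FewFactors W q B I)
    (hI' : ∀ i ∈ I', i ∈ I ∧ i + q ∈ I) : FewFactors W (2 * q) (B ^ 2) I' := by
  intro r
  let A := residueFactors W q I (r % q)
  have hsubset : residueFactors W (2 * q) I' r ⊆ (A ×ˢ A).image fun x => x.1 ++ x.2 := by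
    refine Finset.image_subset_iff.2 fun i hi => ?_
    obtain ⟨hiI', rfl⟩ := Finset.mem_filter.1 hi
    have hmod : i % q = i % (2 * q) % q := (Nat.mod_mod_of_dvd i (Dvd.intro_left 2 rfl)).symm
    refine Finset.mem_image.2 ⟨(factor W q i, factor W q (i + q)), Finset.mem_product.2 ⟨?_, ?_⟩,
      by rw [two_mul, factor_add]⟩
    · exact factor_mem_residueFactors (hI' i hiI').1 hmod
    · exact factor_mem_residueFactors (hI' i hiI').2 (by rw [Nat.add_mod_right, hmod])
  calc (residueFactors W (2 * q) I' r).card ≤ (A ×ˢ A).card :=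
        (Finset.card_le_card hsubset).trans Finset.card_image_le
    _ = A.card ^ 2 := by rw [Finset.card_product, sq]
    _ ≤ B ^ 2 := Nat.pow_le_pow_left (hI _) 2

theorem fewFactors_one_card_toFinset {I : Finset ℕ} (hI : ∀ i ∈ I, i < W.length) :
    FewFactors W 1 W.toFinset.card I := by
  intro r
  have hsubset : residueFactors W 1 I r ⊆ W.toFinset.image fun x => [x] := by
    refine Finset.image_subset_iff.2 fun i hi => ?_
    have hiW := hI i (Finset.mem_filter.1 hi).1
    refine Finset.mem_image.2 ⟨W[i], List.mem_toFinset.2 (List.getElem_mem hiW), ?_⟩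
    rw [factor, List.drop_eq_getElem_cons hiW, List.take_succ_cons, List.take_zero]
  exact (Finset.card_le_card hsubset).trans Finset.card_image_le

theorem FewFactors.exists_repeated_factor {s N : ℕ} (hI : FewFactors W q m (Finset.Ico s (s + N)))
    (hN : m ^ 2 * q < N) :
    ∃ (V : List α) (p : Fin (m + 1) → ℕ), (∀ i j, i < j → p i + q ≤ p j) ∧
      (∀ j, p j < s + N) ∧ ∀ j, factor W q (p j) = V := by
  have hmem (t : ℕ) (ht : t ∈ Finset.range (m ^ 2 + 1)) : s + t * q < s + N := by
    have := Nat.mul_le_mul_right q (Finset.mem_range_succ_iff.1 ht)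
    omega
  obtain ⟨V, -, hV⟩ := Finset.exists_lt_card_fiber_of_mul_lt_card_of_maps_to
    (s := Finset.range (m ^ 2 + 1)) (t := residueFactors W q (Finset.Ico s (s + N)) (s % q))
    (f := fun t => factor W q (s + t * q)) (n := m)
    (fun t ht => factor_mem_residueFactors (Finset.mem_Ico.2 ⟨by omega, hmem t ht⟩)
      (Nat.add_mul_mod_self_right s t q))
    (by
      rw [Finset.card_range, sq]
      exact Nat.lt_succ_of_le (Nat.mul_le_mul_right m (hI _)))
  let e := Finset.orderEmbOfCardLe _ (Nat.succ_le_of_lt hV)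
  have he (j : Fin (m + 1)) := Finset.mem_filter.1 (Finset.orderEmbOfCardLe_mem _ hV j)
  refine ⟨V, fun j => s + e j * q, fun i j hij => ?_, fun j => hmem _ (he j).1, fun j => (he j).2⟩
  have := Nat.mul_le_mul_right q (Nat.succ_le_of_lt (e.strictMono hij))
  rw [Nat.succ_mul] at this
  dsimp only
  omega

end FewFactors

section Doubling

variable {α : Type*} [LinearOrder α] {W : List α} {q m : ℕ}

theorem FewFactors.exists_block {B s N F : ℕ} (hI : FewFactors W q B (Finset.Ico s (s + F * N)))
    (hm : 0 < m) (hq : 0 < q) (hdiv : ¬ IsNDivisible (m + 1) W) (hlen : s + F * N + q ≤ W.length)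
    (hF : B * (q * m) < F) :
    ∃ s', s ≤ s' ∧ s' + N ≤ s + F * N ∧ FewFactors W q m (Finset.Ico s' (s' + N)) := by
  obtain ⟨h, hh⟩ := exists_coloring_factor_le hm hq hdiv
  obtain ⟨b, hb, hconst⟩ := exists_block_eq_of_color_eq (c := fun i => (i % q, h i))
    (fun i k _ hik hk heq => hh i k hik (by omega) (Prod.mk.inj heq).1 (Prod.mk.inj heq).2)
    ((hI.card_image_color_le hq h).trans_lt hF)
  have hbF : b * N + N ≤ F * N := by
    simpa only [Nat.succ_mul] using Nat.mul_le_mul_right N hb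
  refine ⟨s + b * N, by omega, by omega, fun r => ?_⟩
  refine (card_image_le_card_image_of_eq_imp_eq (h := h) ?_).trans
    ((Finset.card_le_univ _).trans (Fintype.card_fin m).le)
  simp only [Finset.mem_filter, Finset.mem_Ico]
  rintro i ⟨⟨hi, hi'⟩, hir⟩ k ⟨⟨hk, hk'⟩, hkr⟩ hik
  have hcolor : (i % q, h i) = (k % q, h k) := Prod.ext (hir.trans hkr.symm) hik
  rcases lt_trichotomy i k with hlt | rfl | hlt
  · exact hconst i k hi hlt hk' hcolor
  · rfl
  · exact (hconst k i hk hlt hi' hcolor.symm).symm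

theorem FewFactors.exists_double {s N N' : ℕ} (hI : FewFactors W q m (Finset.Ico s (s + N)))
    (hm : 0 < m) (hq : 0 < q) (hdiv : ¬ IsNDivisible (m + 1) W) (hlen : s + N + 2 * q ≤ W.length)
    (hN' : 0 < N') (hN : 2 * q * (m + 1) ^ 3 * N' ≤ N) :
    ∃ s', s ≤ s' ∧ s' + N' ≤ s + N ∧ FewFactors W (2 * q) m (Finset.Ico s' (s' + N')) := by
  let F := 2 * q * m ^ 3 + 1
  have hF : F * N' + q ≤ N := by
    have hcube : m ^ 3 + 1 ≤ (m + 1) ^ 3 := by ring_nf; omega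
    calc F * N' + q ≤ 2 * q * (m ^ 3 + 1) * N' := by simp only [F]; nlinarith
      _ ≤ 2 * q * (m + 1) ^ 3 * N' := by gcongr
      _ ≤ N := hN
  have hI' : FewFactors W (2 * q) (m ^ 2) (Finset.Ico s (s + F * N')) :=
    hI.double fun i hi => by
      simp only [Finset.mem_Ico] at hi ⊢
      omega
  obtain ⟨s', hs, hs', hfew⟩ := hI'.exists_block hm (by omega) hdiv (by omega)
    (by simp only [F]; exact Nat.lt_succ_of_le (by ring_nf; rfl))
  exact ⟨s', hs, by omega, hfew⟩

-- The passage from `2 ^ i` to `2 ^ (i + 1)` shortens the interval by a factor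
-- `2 ^ (i + 1) * (m + 1) ^ 3`; the exponent `(j + 1).choose 2` is `1 + 2 + ⋯ + j`.
theorem exists_fewFactors_two_pow {l : ℕ} (hl : 0 < l) (hWl : W.toFinset.card ≤ l) (hm : 0 < m)
    (hdiv : ¬ IsNDivisible (m + 1) W) {j N K : ℕ} (hN : 0 < N) (hK : 2 ^ j ≤ K)
    (hlen : l * (2 ^ (j + 1).choose 2 * (m + 1) ^ (3 * j + 1)) * N + K ≤ W.length) :
    ∃ s, s + N + K ≤ W.length ∧ FewFactors W (2 ^ j) m (Finset.Ico s (s + N)) := by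
  induction j generalizing N with
  | zero =>
    simp only [Nat.choose_succ_self, pow_zero, mul_zero, zero_add, pow_one, one_mul] at hK hlen ⊢
    have hone : FewFactors W 1 W.toFinset.card (Finset.Ico 0 (0 + l * (m + 1) * N)) :=
      fewFactors_one_card_toFinset fun i hi => by
        rw [Finset.mem_Ico] at hi
        omega
    have hF : W.toFinset.card * (1 * m) < l * (m + 1) :=
      calc W.toFinset.card * (1 * m) ≤ l * m := by rw [one_mul]; gcongr
        _ < l * (m + 1) := by gcongr; omega
    obtain ⟨s, -, hs, hfew⟩ := hone.exists_block hm one_pos hdiv (by omega) hF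
    exact ⟨s, by omega, hfew⟩
  | succ j ih =>
    have hpow : 2 ^ (j + 1) = 2 * 2 ^ j := pow_succ' 2 j
    have hloss : l * (2 ^ (j + 1).choose 2 * (m + 1) ^ (3 * j + 1)) *
        (2 * 2 ^ j * (m + 1) ^ 3 * N) =
        l * (2 ^ (j + 1 + 1).choose 2 * (m + 1) ^ (3 * (j + 1) + 1)) * N := by
      rw [Nat.choose_succ_succ' (j + 1) 1, Nat.choose_one_right]
      ring
    obtain ⟨s, hs, hfew⟩ :=
      ih (N := 2 * 2 ^ j * (m + 1) ^ 3 * N) (by positivity) (by omega) (by rwa [hloss])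
    obtain ⟨s', -, hs', hfew'⟩ :=
      hfew.exists_double hm (by positivity) hdiv (by omega) hN le_rfl
    exact ⟨s', by omega, hpow ▸ hfew'⟩

theorem containsPower_or_isNDivisible_of_le_length {l n d J : ℕ} (hl : 0 < l)
    (hWl : W.toFinset.card ≤ l) (hn : 2 ≤ n) (hd : 0 < d) (hJ : n * d ≤ 2 ^ J)
    (hlen : l * (2 ^ ((J + 1).choose 2 + J) * n ^ (3 * J + 3)) + 2 ^ J ≤ W.length) :
    ContainsPower d W ∨ IsNDivisible n W := by
  obtain ⟨m, rfl⟩ : ∃ m, n = m + 1 := ⟨n - 1, by omega⟩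
  rw [or_iff_not_imp_right]
  by_contra! ⟨hdiv, hpow⟩
  obtain ⟨s, hs, hfew⟩ := exists_fewFactors_two_pow hl hWl (by omega) hdiv
    (j := J) (N := (m + 1) ^ 2 * 2 ^ J) (by positivity) le_rfl (hlen.trans_eq' (by ring))
  obtain ⟨V, p, hgap, hp, hV⟩ := hfew.exists_repeated_factor (by gcongr; omega)
  have hmJ : m + 1 ≤ 2 ^ J := (Nat.le_mul_of_pos_right _ hd).trans hJ
  have hmd : m * d ≤ 2 ^ J := (Nat.mul_le_mul_right d m.le_succ).trans hJ
  refine hdiv (isNDivisible_of_repeated_factor hmJ hmd hgap (fun j => ?_) hV hpow)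
  have := hp j
  omega

end Doubling

theorem two_pow_mul_pow_le_rpow_logb {n x : ℕ} (hn : n ^ 2 ≤ x) (hx : 2 ≤ x) :
    (2 : ℝ) ^ ((Nat.clog 2 x + 1).choose 2 + Nat.clog 2 x) * (n : ℝ) ^ (3 * Nat.clog 2 x + 3) ≤
      (x : ℝ) ^ (2 * Real.logb 2 x + 10) := by
  set J := Nat.clog 2 x
  set L := Real.logb 2 x
  have hxL : (2 : ℝ) ^ L = x := Real.rpow_logb (by norm_num) (by norm_num) (by positivity)
  have hL : 1 ≤ L := by
    rw [Real.le_logb_iff_rpow_le one_lt_two (by positivity), Real.rpow_one]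
    exact_mod_cast hx
  have hJL : (J : ℝ) ≤ L + 1 := by
    have hceil : ⌈L⌉₊ = J := Real.natCeil_logb_natCast 2 x
    exact hceil ▸ (Nat.ceil_lt_add_one (by linarith)).le
  have hnL : (n : ℝ) ≤ 2 ^ (L / 2) := by
    refine le_of_sq_le_sq ?_ (by positivity)
    rw [← Real.rpow_mul_natCast (by norm_num), Nat.cast_ofNat, div_mul_cancel₀ L two_ne_zero, hxL]
    exact_mod_cast hn
  have hexp : ((J + 1).choose 2 + J : ℕ) + L / 2 * (3 * J + 3 : ℕ) ≤ L * (2 * L + 10) := by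
    push_cast [Nat.cast_choose_two]
    nlinarith [(J.cast_nonneg : (0 : ℝ) ≤ J)]
  calc (2 : ℝ) ^ ((J + 1).choose 2 + J) * (n : ℝ) ^ (3 * J + 3)
      ≤ 2 ^ ((J + 1).choose 2 + J) * (2 ^ (L / 2)) ^ (3 * J + 3) := by gcongr
    _ = 2 ^ (((J + 1).choose 2 + J : ℕ) + L / 2 * (3 * J + 3 : ℕ)) := by
        rw [Real.rpow_add two_pos, Real.rpow_natCast, Real.rpow_mul_natCast two_pos.le]
    _ ≤ 2 ^ (L * (2 * L + 10)) := Real.rpow_le_rpow_of_exponent_le one_le_two hexp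
    _ = (x : ℝ) ^ (2 * L + 10) := by rw [Real.rpow_mul two_pos.le, hxL]

theorem stmt_10_general {α : Type*} [LinearOrder α] {l n d : ℕ} (hl : 0 < l) (hn : 2 ≤ n)
    (hd : n ≤ d) {W : List α} (hWl : W.toFinset.card ≤ l)
    (hlen : (256 : ℝ) * l *
        ((n * d : ℕ) : ℝ) ^ (2 * Real.logb 2 ((n * d : ℕ) : ℝ) + 10) *
        (d : ℝ) ^ 2 ≤ (W.length : ℝ)) :
    ContainsPower d W ∨ IsNDivisible n W := by
  let J := Nat.clog 2 (n * d)
  let loss := 2 ^ ((J + 1).choose 2 + J) * n ^ (3 * J + 3)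
  have hloss : (loss : ℝ) ≤ ((n * d : ℕ) : ℝ) ^ (2 * Real.logb 2 ((n * d : ℕ) : ℝ) + 10) := by
    exact_mod_cast two_pow_mul_pow_le_rpow_logb (by nlinarith) (by nlinarith)
  have hJ : 2 ^ J ≤ l * loss :=
    calc 2 ^ J ≤ 2 ^ ((J + 1).choose 2 + J) := Nat.pow_le_pow_right two_pos (Nat.le_add_left _ _)
      _ ≤ loss := Nat.le_mul_of_pos_right _ (by positivity)
      _ ≤ l * loss := Nat.le_mul_of_pos_left _ hl
  have hd1 : (1 : ℝ) ≤ (d : ℝ) ^ 2 := one_le_pow₀ (by exact_mod_cast (by omega : 1 ≤ d))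
  have htwo : (2 : ℝ) * (l * loss) ≤ W.length :=
    calc (2 : ℝ) * (l * loss) ≤ 256 * (l * loss) := by gcongr; norm_num
      _ = 256 * l * loss * 1 := by ring
      _ ≤ 256 * l * ((n * d : ℕ) : ℝ) ^ (2 * Real.logb 2 ((n * d : ℕ) : ℝ) + 10) * (d : ℝ) ^ 2 := by
        gcongr
      _ ≤ W.length := hlen
  have hlength : l * loss + 2 ^ J ≤ W.length :=
    calc l * loss + 2 ^ J ≤ 2 * (l * loss) := by omega
      _ ≤ W.length := mod_cast htwo
  exact containsPower_or_isNDivisible_of_le_length hl hWl hn (by omega)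
    (Nat.le_pow_clog one_lt_two _) hlength

/-- Theorem: every word over an `l`-letter alphabet of length at least
`256 · l · (nd)^(2·log₂(nd)+10) · d²` contains a `d`-th power of a nonempty word
or is `n`-divisible. -/
theorem stmt_10 (l n d : ℕ) (hl : 0 < l) (hn : 2 ≤ n) (hd : n ≤ d)
    (W : List (Fin l))
    (hlen : (256 : ℝ) * l *
        ((n * d : ℕ) : ℝ) ^ (2 * Real.logb 2 ((n * d : ℕ) : ℝ) + 10) *
        (d : ℝ) ^ 2 ≤ (W.length : ℝ)) :
    (∃ u : List (Fin l), u ≠ [] ∧ (List.replicate d u).flatten <:+: W) ∨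
      IsNDivisible n W :=
  stmt_10_general hl hn hd ((Finset.card_le_univ _).trans (Fintype.card_fin l).le) hlen
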